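/- Assume the Felli–Schneider condition Λ = 4(d−1)/(q²−4). For ε ≥ 0 define G_ε(k) := ((1−ε)(k+𝔞−1)(2(k+𝔞)−1)(q−2)² − q(q−1)) / (2(1−ε)k(k+2𝔞)(q−2)²), coefficients A_0 := 1, A_k := A_{k−1}G_ε(k) and B_0 := 1, B_k := B_{k−1}G_ε(k+𝔟−𝔞) for k ≥ 1, and η := 1/(4(1−ε)α²(𝔟²−𝔞²)). Then for all sufficiently small ε ≥ 0, the set of H²((0,∞))-solutions g of the equation (1−ε)(−g″ + (2d+Λ)g) − (q−1)u^{q−2}g = f^{(2)} on (0,∞), where f^{(2)} := M u^{2q−3}√(2(d−1)/(d+2)) and M := (q−1)(q−2)√|𝕊^{d−1}|/(2d), is exactly the one-parameter family { g_τ := τ u^{√(1+2d/Λ)} Σ_{k=0}^∞ A_k cosh^{−2k}(α·) − η f^{(2)} Σ_{k=0}^∞ B_k cosh^{−2k}(α·) : τ ∈ ℝ }. -/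

import Mathlib

/-!
Put `c = cosh(αs)`. The operator `(1-ε)(-∂² + 4α²𝔞²) - W c⁻²`, with `4α²𝔞² = 2d + Λ` and
`W = q(q-1)Λ/2`, maps `c^{-2x}` to a combination of `c^{-2x}` and `c^{-2x-2}`. Applied to a series
`Σ a_k c^{-2(x₀+k)}` whose coefficients obey the recursion given by `G_ε`, it therefore telescopes
to its leading term (`cser_ode`). This term is zero for `x₀ = 𝔞` (the `A`-series), and for
`x₀ = 𝔟` (the `B`-series) it is a multiple of `f⁽²⁾` that `η` normalises. The Felli–Schneider
condition gives `𝔞 < 𝔟` (`afrak_lt_bfrak`), so no denominator vanishes. As `G_ε → 1` at infinity,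
the series may be differentiated termwise for `s > 0`.

Each `g_τ` is in `H²(0,∞)`: on `[1,∞)` the series and its derivative decay like the leading term
(`cser_decay`), near `0` a Grönwall estimate for the equation itself bounds them
(`SolvesOde.bounded`), and the second derivative is controlled through the equation.

Conversely, the difference of an `H²`-solution and `g_0` solves the homogeneous equation. Its
Wronskian with the `A`-series is constant, and integrable as a combination of products of `L²`
functions, so it is zero; as the `A`-series is not identically zero, the difference is a multiple
of it (`SolvesOde.proportional`). The argument works for every `0 ≤ ε < 1`.
-/

open MeasureTheory Real Filter Topology Asymptotics

noncomputable section

/-- Euclidean space ℝ^d. -/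
abbrev Ed (d : ℕ) : Type := EuclideanSpace ℝ (Fin d)

/-- The surface measure on the unit sphere 𝕊^{d-1}. -/
def sphMeasure (d : ℕ) : Measure (Metric.sphere (0 : Ed d) 1) :=
  (volume : Measure (Ed d)).toSphere

/-- The total surface measure |𝕊^{d-1}|. -/
def sphVol (d : ℕ) : ℝ := (sphMeasure d Set.univ).toReal

/-- α = ((q-2)/2)√Λ. -/
def alphaV (q Λ : ℝ) : ℝ := (q - 2) / 2 * Real.sqrt Λ

/-- β = (qΛ/2)^{1/(q-2)}. -/
def betaV (q Λ : ℝ) : ℝ := (q * Λ / 2) ^ (1 / (q - 2))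

/-- The optimizer u(s) = β cosh(αs)^{-2/(q-2)}. -/
def Ufun (q Λ : ℝ) (s : ℝ) : ℝ := betaV q Λ * Real.cosh (alphaV q Λ * s) ^ (-(2 / (q - 2)))

/-- M = (q-1)(q-2)√|𝕊^{d-1}|/(2d). -/
def Mconst (d : ℕ) (q : ℝ) : ℝ := (q - 1) * (q - 2) * Real.sqrt (sphVol d) / (2 * d)

/-- The inhomogeneity f⁽⁰⁾ = M u^{2q-3}. -/
def f0fun (d : ℕ) (q Λ : ℝ) (s : ℝ) : ℝ := Mconst d q * Ufun q Λ s ^ (2 * q - 3)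

/-- The inhomogeneity f⁽²⁾ = M u^{2q-3} √(2(d-1)/(d+2)). -/
def f2fun (d : ℕ) (q Λ : ℝ) (s : ℝ) : ℝ :=
  Mconst d q * Ufun q Λ s ^ (2 * q - 3) * Real.sqrt (2 * ((d : ℝ) - 1) / ((d : ℝ) + 2))

/-- Surrogate for membership in H¹(ℝ). -/
def MemH1R (g : ℝ → ℝ) : Prop :=
  ContDiff ℝ 1 g ∧ Integrable (fun s => g s ^ 2) ∧ Integrable (fun s => deriv g s ^ 2)

/-- The energy functional 𝓔 with damping constant c, zeroth-order coefficient κ and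
inhomogeneity f. -/
def Energy (q Λ c κ : ℝ) (f g : ℝ → ℝ) : ℝ :=
  ∫ s, ((1 - c) * (deriv g s ^ 2 + κ * g s ^ 2) - (q - 1) * Ufun q Λ s ^ (q - 2) * g s ^ 2
    - 2 * f s * g s)

/-- The minimization problem E⁽⁰⁾(ε) in the radial (degree 0) sector, subject to the two
orthogonality constraints. -/
def E0 (d : ℕ) (q Λ ε : ℝ) : ℝ :=
  sInf {r : ℝ | ∃ g : ℝ → ℝ, MemH1R g ∧
    (∫ s, g s * Ufun q Λ s ^ (q - 1)) = 0 ∧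
    (∫ s, g s * Ufun q Λ s ^ (q - 2) * deriv (Ufun q Λ) s) = 0 ∧
    r = Energy q Λ ε Λ (f0fun d q Λ) g}

/-- The minimization problem E⁽²⁾(ε) in the degree 2 sector. -/
def E2 (d : ℕ) (q Λ ε : ℝ) : ℝ :=
  sInf {r : ℝ | ∃ g : ℝ → ℝ, MemH1R g ∧ r = Energy q Λ ε (2 * d + Λ) (f2fun d q Λ) g}

end

noncomputable section

/-- 𝔞 = √(1 + 2d/Λ)/(q-2). -/
def afrak (d : ℕ) (q Λ : ℝ) : ℝ := Real.sqrt (1 + 2 * d / Λ) / (q - 2)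

/-- 𝔟 = (2q-3)/(q-2). -/
def bfrak (q : ℝ) : ℝ := (2 * q - 3) / (q - 2)

/-- The ratio G_ε(x) in the recursion for the series coefficients. -/
def Gfun (d : ℕ) (q Λ ε : ℝ) (x : ℝ) : ℝ :=
  ((1 - ε) * (x + afrak d q Λ - 1) * (2 * (x + afrak d q Λ) - 1) * (q - 2) ^ 2 - q * (q - 1)) /
    (2 * (1 - ε) * x * (x + 2 * afrak d q Λ) * (q - 2) ^ 2)

/-- The coefficients A_k of the homogeneous series solution. -/
def Aseq (d : ℕ) (q Λ ε : ℝ) : ℕ → ℝ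
  | 0 => 1
  | k + 1 => Aseq d q Λ ε k * Gfun d q Λ ε ((k : ℝ) + 1)

/-- The coefficients B_k of the inhomogeneous series solution. -/
def Bseq (d : ℕ) (q Λ ε : ℝ) : ℕ → ℝ
  | 0 => 1
  | k + 1 => Bseq d q Λ ε k * Gfun d q Λ ε (((k : ℝ) + 1) + bfrak q - afrak d q Λ)

/-- η = 1/(4(1-ε)α²(𝔟²-𝔞²)). -/
def etaV (d : ℕ) (q Λ ε : ℝ) : ℝ :=
  1 / (4 * (1 - ε) * alphaV q Λ ^ 2 * (bfrak q ^ 2 - afrak d q Λ ^ 2))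

/-- The candidate solution g_τ given by the two power series. -/
def gSol (d : ℕ) (q Λ ε τ : ℝ) (s : ℝ) : ℝ :=
  τ * Ufun q Λ s ^ Real.sqrt (1 + 2 * d / Λ) *
      ∑' k : ℕ, Aseq d q Λ ε k * (Real.cosh (alphaV q Λ * s) ^ (2 * k))⁻¹ -
    etaV d q Λ ε * f2fun d q Λ s *
      ∑' k : ℕ, Bseq d q Λ ε k * (Real.cosh (alphaV q Λ * s) ^ (2 * k))⁻¹

/-- An H²((0,∞))-solution of the inhomogeneous degree-2 equation
`(1-ε)(-g'' + (2d+Λ)g) - (q-1)u^{q-2}g = f⁽²⁾` on (0,∞). -/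
def IsH2Sol (d : ℕ) (q Λ ε : ℝ) (g : ℝ → ℝ) : Prop :=
  ContDiffOn ℝ 2 g (Set.Ioi 0) ∧
  IntegrableOn (fun s => g s ^ 2) (Set.Ioi 0) ∧
  IntegrableOn (fun s => deriv g s ^ 2) (Set.Ioi 0) ∧
  IntegrableOn (fun s => deriv (deriv g) s ^ 2) (Set.Ioi 0) ∧
  ∀ s ∈ Set.Ioi (0 : ℝ),
    (1 - ε) * (-(deriv (deriv g) s) + (2 * d + Λ) * g s) - (q - 1) * Ufun q Λ s ^ (q - 2) * g s
      = f2fun d q Λ s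

end

/-! ### Hyperbolic series and their derivatives -/

/-- `k`-th term `a_k cosh(αs)^{-2(x₀+k)}` of a hyperbolic series. -/
noncomputable def cterm (a : ℕ → ℝ) (α x₀ : ℝ) (k : ℕ) (s : ℝ) : ℝ :=
  a k * Real.cosh (α * s) ^ (-(2 * (x₀ + k)))

/-- First derivative of `cterm` in `s`. -/
noncomputable def cterm' (a : ℕ → ℝ) (α x₀ : ℝ) (k : ℕ) (s : ℝ) : ℝ :=
  a k * (-(2 * (x₀ + k)) * α * (Real.sinh (α * s) / Real.cosh (α * s)) *
    Real.cosh (α * s) ^ (-(2 * (x₀ + k))))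

/-- Second derivative of `cterm` in `s`, with `sinh²` eliminated. -/
noncomputable def cterm'' (a : ℕ → ℝ) (α x₀ : ℝ) (k : ℕ) (s : ℝ) : ℝ :=
  a k * (α ^ 2 * (4 * (x₀ + k) ^ 2 - 2 * (x₀ + k) * (2 * (x₀ + k) + 1) / Real.cosh (α * s) ^ 2) *
    Real.cosh (α * s) ^ (-(2 * (x₀ + k))))

/-- The hyperbolic series `Σ a_k cosh(αs)^{-2(x₀+k)}`. -/
noncomputable def cser (a : ℕ → ℝ) (α x₀ : ℝ) (s : ℝ) : ℝ := ∑' k, cterm a α x₀ k s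

/-- The termwise first derivative of `cser`. -/
noncomputable def cser' (a : ℕ → ℝ) (α x₀ : ℝ) (s : ℝ) : ℝ := ∑' k, cterm' a α x₀ k s

/-- The termwise second derivative of `cser`. -/
noncomputable def cser'' (a : ℕ → ℝ) (α x₀ : ℝ) (s : ℝ) : ℝ := ∑' k, cterm'' a α x₀ k s

/-- Consecutive ratios of `a` tend to `1` (zero terms allowed), so `Σ a_k y^k` converges
for `|y| < 1`. -/
def RatioOne (a : ℕ → ℝ) : Prop :=
  ∃ G : ℕ → ℝ, (∀ k, a (k + 1) = a k * G k) ∧ Tendsto G atTop (𝓝 1)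

lemma RatioOne.shift {a : ℕ → ℝ} (ha : RatioOne a) : RatioOne (fun k => a (k + 1)) := by
  obtain ⟨G, h1, h2⟩ := ha
  exact ⟨fun k => G (k + 1), fun k => h1 (k + 1), h2.comp (tendsto_add_atTop_nat 1)⟩

/-- A quadratic weight does not spoil convergence inside the unit disc; it dominates both
termwise derivatives. -/
lemma RatioOne.summable {a : ℕ → ℝ} (ha : RatioOne a) {x₀ : ℝ} (hx : 0 < x₀) {r : ℝ}
    (hr0 : 0 ≤ r) (hr1 : r < 1) : Summable (fun k : ℕ => |a k| * (1 + (x₀ + k)) ^ 2 * r ^ k) := by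
  obtain ⟨G, h1, h2⟩ := ha
  have hden : Tendsto (fun k : ℕ => 1 + (x₀ + (k : ℝ))) atTop atTop :=
    tendsto_atTop_add_const_left _ _ (tendsto_atTop_add_const_left _ _ tendsto_natCast_atTop_atTop)
  have ht : Tendsto (fun k : ℕ => |G k| * (1 + (1 + (x₀ + (k : ℝ)))⁻¹) ^ 2 * r) atTop
      (𝓝 (|1| * (1 + 0) ^ 2 * r)) :=
    ((h2.abs).mul ((tendsto_const_nhds.add hden.inv_tendsto_atTop).pow 2)).mul_const r
  simp only [abs_one, add_zero, one_pow, one_mul] at ht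
  obtain ⟨ρ, hρ1, hρ2⟩ := exists_between hr1
  refine summable_of_ratio_norm_eventually_le hρ2 ?_
  filter_upwards [ht.eventually_lt_const hρ1] with k hk
  have hp : 0 < 1 + (x₀ + (k : ℝ)) := by positivity
  have e : |a (k + 1)| * (1 + (x₀ + ((k + 1 : ℕ) : ℝ))) ^ 2 * r ^ (k + 1) =
      (|G k| * (1 + (1 + (x₀ + (k : ℝ)))⁻¹) ^ 2 * r) * (|a k| * (1 + (x₀ + k)) ^ 2 * r ^ k) := by
    rw [h1, abs_mul, pow_succ]
    push_cast
    field_simp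
    ring
  rw [e, norm_mul, Real.norm_eq_abs (_ * r), abs_of_nonneg (by positivity)]
  gcongr

lemma half_exp_le_cosh (t : ℝ) : Real.exp t / 2 ≤ Real.cosh t := by
  rw [Real.cosh_eq]
  have := Real.exp_pos (-t)
  linarith

lemma tendsto_cosh_atTop' : Tendsto Real.cosh atTop atTop :=
  tendsto_atTop_mono half_exp_le_cosh (Real.tendsto_exp_atTop.atTop_div_const two_pos)

lemma one_lt_cosh_mul {α s : ℝ} (hα : 0 < α) (hs : 0 < s) : 1 < Real.cosh (α * s) := by
  rw [Real.one_lt_cosh]; positivity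

lemma cosh_rpow_split (c x₀ : ℝ) (hc : 0 < c) (k : ℕ) :
    c ^ (-(2 * (x₀ + k))) = c ^ (-(2 * x₀)) * ((c ^ 2)⁻¹) ^ k := by
  rw [show -(2 * (x₀ + k)) = -(2 * x₀) + -((2 * k : ℕ) : ℝ) by push_cast; ring, Real.rpow_add hc,
    Real.rpow_neg hc.le (((2 * k : ℕ) : ℝ)), Real.rpow_natCast, pow_mul, inv_pow]

/-- The dominating sequence on `s ≥ δ`. -/
lemma RatioOne.summable_cosh {a : ℕ → ℝ} (ha : RatioOne a) {x₀ : ℝ} (hx : 0 < x₀) {c : ℝ}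
    (hc : 1 < c) : Summable (fun k : ℕ => |a k| * (1 + (x₀ + k)) ^ 2 * c ^ (-(2 * (x₀ + k)))) := by
  have hc0 : 0 < c := by linarith
  have h := (ha.summable hx (r := (c ^ 2)⁻¹) (by positivity)
    (inv_lt_one_of_one_lt₀ (by nlinarith))).mul_left (c ^ (-(2 * x₀)))
  refine h.congr fun k => ?_
  rw [cosh_rpow_split c x₀ hc0 k]; ring

lemma abs_tanh_le (t : ℝ) : |Real.sinh t / Real.cosh t| ≤ 1 := by
  have hc := Real.cosh_pos t
  rw [abs_div, abs_of_pos hc, div_le_one hc, ← abs_of_pos hc, ← sq_le_sq, Real.cosh_sq]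
  linarith

lemma cterm_bound (a : ℕ → ℝ) (α : ℝ) {x₀ : ℝ} (hx : 0 < x₀) (k : ℕ) (s : ℝ) :
    |cterm a α x₀ k s| ≤
      |a k| * (1 + (x₀ + k)) ^ 2 * Real.cosh (α * s) ^ (-(2 * (x₀ + k))) := by
  have hc := Real.cosh_pos (α * s)
  have hk : 0 < x₀ + (k : ℝ) := by positivity
  rw [cterm, abs_mul, abs_of_pos (Real.rpow_pos_of_pos hc _)]
  gcongr
  exact le_mul_of_one_le_right (abs_nonneg _) (by nlinarith)

lemma cterm'_bound (a : ℕ → ℝ) {α x₀ : ℝ} (hα : 0 < α) (hx : 0 < x₀) (k : ℕ) (s : ℝ) :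
    |cterm' a α x₀ k s| ≤
      2 * α * (|a k| * (1 + (x₀ + k)) ^ 2 * Real.cosh (α * s) ^ (-(2 * (x₀ + k)))) := by
  have hc := Real.cosh_pos (α * s)
  have hk : 0 < x₀ + (k : ℝ) := by positivity
  have hp := Real.rpow_pos_of_pos hc (-(2 * (x₀ + k)))
  rw [cterm', abs_mul, abs_mul, abs_of_pos hp, abs_mul, abs_mul, abs_neg, abs_of_pos hα,
    abs_of_pos (show 0 < 2 * (x₀ + (k : ℝ)) by positivity)]
  have h1 : 2 * (x₀ + (k : ℝ)) * α * |Real.sinh (α * s) / Real.cosh (α * s)| ≤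
      2 * α * (1 + (x₀ + k)) ^ 2 := by
    calc _ ≤ 2 * (x₀ + (k : ℝ)) * α * 1 := by gcongr; exact abs_tanh_le _
      _ = 2 * α * (x₀ + k) := by ring
      _ ≤ _ := by gcongr; nlinarith
  calc _ ≤ |a k| * (2 * α * (1 + (x₀ + k)) ^ 2 * Real.cosh (α * s) ^ (-(2 * (x₀ + k)))) := by
        gcongr
    _ = _ := by ring

lemma cterm''_bound (a : ℕ → ℝ) {α x₀ : ℝ} (hx : 0 < x₀) (k : ℕ) (s : ℝ) :
    |cterm'' a α x₀ k s| ≤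
      8 * α ^ 2 * (|a k| * (1 + (x₀ + k)) ^ 2 * Real.cosh (α * s) ^ (-(2 * (x₀ + k)))) := by
  have hc := Real.cosh_pos (α * s)
  have hc1 := Real.one_le_cosh (α * s)
  have hk : 0 < x₀ + (k : ℝ) := by positivity
  have hp := Real.rpow_pos_of_pos hc (-(2 * (x₀ + k)))
  rw [cterm'', abs_mul, abs_mul, abs_of_pos hp, abs_mul, abs_of_nonneg (sq_nonneg α)]
  have h2 : 2 * (x₀ + k) * (2 * (x₀ + k) + 1) / Real.cosh (α * s) ^ 2 ≤
      2 * (x₀ + k) * (2 * (x₀ + k) + 1) := div_le_self (by positivity) (by nlinarith)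
  have h3 : 0 ≤ 2 * (x₀ + k) * (2 * (x₀ + k) + 1) / Real.cosh (α * s) ^ 2 := by positivity
  have h1 : |4 * (x₀ + k) ^ 2 - 2 * (x₀ + k) * (2 * (x₀ + k) + 1) / Real.cosh (α * s) ^ 2| ≤
      8 * (1 + (x₀ + k)) ^ 2 := by
    rw [abs_le]; constructor <;> nlinarith
  calc _ ≤ |a k| * (α ^ 2 * (8 * (1 + (x₀ + k)) ^ 2) *
        Real.cosh (α * s) ^ (-(2 * (x₀ + k)))) := by
        gcongr
    _ = _ := by ring

lemma hasDerivAt_cosh_mul (α s : ℝ) :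
    HasDerivAt (fun s => Real.cosh (α * s)) (α * Real.sinh (α * s)) s := by
  have h := ((hasDerivAt_id s).const_mul α).cosh
  simp only [id, mul_one] at h
  rwa [mul_comm] at h

lemma hasDerivAt_sinh_mul (α s : ℝ) :
    HasDerivAt (fun s => Real.sinh (α * s)) (α * Real.cosh (α * s)) s := by
  have h := ((hasDerivAt_id s).const_mul α).sinh
  simp only [id, mul_one] at h
  rwa [mul_comm] at h

lemma hasDerivAt_cosh_rpow (α p s : ℝ) :
    HasDerivAt (fun s => Real.cosh (α * s) ^ p)
      (p * α * (Real.sinh (α * s) / Real.cosh (α * s)) * Real.cosh (α * s) ^ p) s := by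
  have hc := Real.cosh_pos (α * s)
  refine ((hasDerivAt_cosh_mul α s).rpow_const (p := p) (Or.inl hc.ne')).congr_deriv ?_
  rw [Real.rpow_sub_one hc.ne']
  field_simp

lemma hasDerivAt_cterm (a : ℕ → ℝ) (α x₀ : ℝ) (k : ℕ) (s : ℝ) :
    HasDerivAt (cterm a α x₀ k) (cterm' a α x₀ k s) s :=
  (hasDerivAt_cosh_rpow α (-(2 * (x₀ + k))) s).const_mul (a k)

lemma hasDerivAt_cterm' (a : ℕ → ℝ) (α x₀ : ℝ) (k : ℕ) (s : ℝ) :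
    HasDerivAt (cterm' a α x₀ k) (cterm'' a α x₀ k s) s := by
  have hc := Real.cosh_pos (α * s)
  have h := ((((hasDerivAt_sinh_mul α s).div (hasDerivAt_cosh_mul α s) hc.ne').const_mul
    (-(2 * (x₀ + k)) * α)).mul (hasDerivAt_cosh_rpow α (-(2 * (x₀ + k))) s)).const_mul (a k)
  refine h.congr_deriv ?_
  simp only [cterm'']
  have hs : Real.sinh (α * s) ^ 2 = Real.cosh (α * s) ^ 2 - 1 := by
    rw [Real.cosh_sq]; ring
  simp only [Pi.div_apply]
  field_simp
  ring_nf
  rw [hs]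
  ring

section Series

variable {a : ℕ → ℝ} (ha : RatioOne a) {α x₀ : ℝ} (hα : 0 < α) (hx : 0 < x₀)

lemma cosh_rpow_le {α : ℝ} (hα : 0 < α) {x δ s : ℝ} (hx : 0 ≤ x) (hδ : 0 < δ) (h : δ ≤ s) :
    Real.cosh (α * s) ^ (-(2 * x)) ≤ Real.cosh (α * δ) ^ (-(2 * x)) := by
  refine Real.rpow_le_rpow_of_nonpos (Real.cosh_pos _) ?_ (by linarith)
  rw [Real.cosh_le_cosh, abs_of_pos (by positivity), abs_of_pos (mul_pos hα (by linarith))]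
  gcongr

include ha hα hx

lemma summable_cterm {s : ℝ} (hs : 0 < s) : Summable (fun k => cterm a α x₀ k s) :=
  (ha.summable_cosh hx (one_lt_cosh_mul hα hs)).of_norm_bounded
    (fun k => cterm_bound a α hx k s)

lemma summable_cterm' {s : ℝ} (hs : 0 < s) : Summable (fun k => cterm' a α x₀ k s) :=
  ((ha.summable_cosh hx (one_lt_cosh_mul hα hs)).mul_left (2 * α)).of_norm_bounded
    (fun k => cterm'_bound a hα hx k s)

lemma summable_cterm'' {s : ℝ} (hs : 0 < s) : Summable (fun k => cterm'' a α x₀ k s) :=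
  ((ha.summable_cosh hx (one_lt_cosh_mul hα hs)).mul_left (8 * α ^ 2)).of_norm_bounded
    (fun k => cterm''_bound a hx k s)

lemma hasDerivAt_cser {s : ℝ} (hs : 0 < s) : HasDerivAt (cser a α x₀) (cser' a α x₀ s) s := by
  have hδ : 0 < s / 2 := by linarith
  refine hasDerivAt_tsum_of_isPreconnected (t := Set.Ioi (s / 2))
    ((ha.summable_cosh hx (one_lt_cosh_mul hα hδ)).mul_left (2 * α)) isOpen_Ioi
    isPreconnected_Ioi (fun k y _ => hasDerivAt_cterm a α x₀ k y) (fun k y hy => ?_)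
    (show s / 2 < s by linarith) (summable_cterm ha hα hx hs) (show s / 2 < s by linarith)
  refine (cterm'_bound a hα hx k y).trans ?_
  gcongr 2 * α * (_ * ?_)
  exact cosh_rpow_le hα (by positivity) hδ (le_of_lt hy)

lemma hasDerivAt_cser' {s : ℝ} (hs : 0 < s) : HasDerivAt (cser' a α x₀) (cser'' a α x₀ s) s := by
  have hδ : 0 < s / 2 := by linarith
  refine hasDerivAt_tsum_of_isPreconnected (t := Set.Ioi (s / 2))
    ((ha.summable_cosh hx (one_lt_cosh_mul hα hδ)).mul_left (8 * α ^ 2)) isOpen_Ioi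
    isPreconnected_Ioi (fun k y _ => hasDerivAt_cterm' a α x₀ k y) (fun k y hy => ?_)
    (show s / 2 < s by linarith) (summable_cterm' ha hα hx hs) (show s / 2 < s by linarith)
  refine (cterm''_bound a hx k y).trans ?_
  gcongr 8 * α ^ 2 * (_ * ?_)
  exact cosh_rpow_le hα (by positivity) hδ (le_of_lt hy)

/-- Away from the origin the series and its derivative decay like the leading term. -/
lemma cser_decay : ∃ C, 0 ≤ C ∧ ∀ s, 1 ≤ s →
    |cser a α x₀ s| ≤ C * Real.cosh (α * s) ^ (-(2 * x₀)) ∧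
    |cser' a α x₀ s| ≤ C * Real.cosh (α * s) ^ (-(2 * x₀)) := by
  have hc1 := one_lt_cosh_mul hα one_pos
  have hS := ha.summable hx (r := (Real.cosh (α * 1) ^ 2)⁻¹) (by positivity)
    (inv_lt_one_of_one_lt₀ (by nlinarith))
  set S := ∑' k : ℕ, |a k| * (1 + (x₀ + k)) ^ 2 * ((Real.cosh (α * 1) ^ 2)⁻¹) ^ k with hSdef
  have hS0 : 0 ≤ S := tsum_nonneg fun k => by positivity
  have key : ∀ s, 1 ≤ s → ∀ k : ℕ,
      |a k| * (1 + (x₀ + k)) ^ 2 * Real.cosh (α * s) ^ (-(2 * (x₀ + k))) ≤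
      Real.cosh (α * s) ^ (-(2 * x₀)) *
        (|a k| * (1 + (x₀ + k)) ^ 2 * ((Real.cosh (α * 1) ^ 2)⁻¹) ^ k) := by
    intro s hs k
    have hc := Real.cosh_pos (α * s)
    have hc' := Real.cosh_pos (α * 1)
    have hle : Real.cosh (α * 1) ≤ Real.cosh (α * s) := by
      rw [Real.cosh_le_cosh, abs_of_pos (by positivity), abs_of_pos (mul_pos hα (by linarith))]
      gcongr
    rw [cosh_rpow_split _ x₀ hc k]
    have : ((Real.cosh (α * s) ^ 2)⁻¹) ^ k ≤ ((Real.cosh (α * 1) ^ 2)⁻¹) ^ k := by gcongr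
    calc _ ≤ |a k| * (1 + (x₀ + k)) ^ 2 * (Real.cosh (α * s) ^ (-(2 * x₀)) *
          ((Real.cosh (α * 1) ^ 2)⁻¹) ^ k) := by gcongr
      _ = _ := by ring
  refine ⟨(1 + 2 * α) * S, by positivity, fun s hs => ⟨?_, ?_⟩⟩
  · have hp := Real.rpow_pos_of_pos (Real.cosh_pos (α * s)) (-(2 * x₀))
    have h := tsum_of_norm_bounded (f := fun k => cterm a α x₀ k s)
      (hS.hasSum.mul_left (Real.cosh (α * s) ^ (-(2 * x₀))))
      (fun k => (cterm_bound a α hx k s).trans (key s hs k))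
    refine h.trans ?_
    have : 0 ≤ α * S * Real.cosh (α * s) ^ (-(2 * x₀)) := by positivity
    rw [← hSdef]
    nlinarith
  · have hp := Real.rpow_pos_of_pos (Real.cosh_pos (α * s)) (-(2 * x₀))
    have h := tsum_of_norm_bounded (f := fun k => cterm' a α x₀ k s)
      ((hS.hasSum.mul_left (Real.cosh (α * s) ^ (-(2 * x₀)))).mul_left (2 * α))
      (fun k => (cterm'_bound a hα hx k s).trans
        (mul_le_mul_of_nonneg_left (key s hs k) (by positivity)))
    refine h.trans ?_
    have : 0 ≤ S * Real.cosh (α * s) ^ (-(2 * x₀)) := by positivity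
    rw [← hSdef]
    nlinarith

/-- Under the two-term recursion the operator `D(-∂² + 4α²𝔞²) - W cosh⁻²` telescopes on the
series, and only the leading term survives. -/
lemma cser_ode {D A W : ℝ}
    (hrec : ∀ k : ℕ, D * (4 * α ^ 2) * ((x₀ + (k + 1 : ℕ)) ^ 2 - A ^ 2) * a (k + 1) =
      (D * α ^ 2 * (2 * (x₀ + k)) * (2 * (x₀ + k) + 1) - W) * a k) {s : ℝ} (hs : 0 < s) :
    D * (-(cser'' a α x₀ s) + 4 * α ^ 2 * A ^ 2 * cser a α x₀ s) -
      W / Real.cosh (α * s) ^ 2 * cser a α x₀ s =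
      D * (4 * α ^ 2) * (A ^ 2 - x₀ ^ 2) * a 0 * Real.cosh (α * s) ^ (-(2 * x₀)) := by
  have hc := Real.cosh_pos (α * s)
  have h0 := (summable_cterm ha hα hx hs).hasSum
  have h2 := (summable_cterm'' ha hα hx hs).hasSum
  have hsum := ((h2.neg.add (h0.mul_left (4 * α ^ 2 * A ^ 2))).mul_left D).sub
    (h0.mul_left (W / Real.cosh (α * s) ^ 2))
  set L : ℕ → ℝ := fun k => D * (4 * α ^ 2) * (A ^ 2 - (x₀ + k) ^ 2) * a k *
    Real.cosh (α * s) ^ (-(2 * (x₀ + k))) with hL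
  have hterm : ∀ k, D * (-cterm'' a α x₀ k s + 4 * α ^ 2 * A ^ 2 * cterm a α x₀ k s) -
      W / Real.cosh (α * s) ^ 2 * cterm a α x₀ k s = L k - L (k + 1) := by
    intro k
    have e : Real.cosh (α * s) ^ (-(2 * (x₀ + ((k + 1 : ℕ) : ℝ)))) =
        Real.cosh (α * s) ^ (-(2 * (x₀ + k))) / Real.cosh (α * s) ^ 2 := by
      rw [cosh_rpow_split _ x₀ hc, cosh_rpow_split _ x₀ hc, pow_succ]
      field_simp
    have e2 : L (k + 1) = -((D * α ^ 2 * (2 * (x₀ + k)) * (2 * (x₀ + k) + 1) - W) * a k) *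
        (Real.cosh (α * s) ^ (-(2 * (x₀ + k))) / Real.cosh (α * s) ^ 2) := by
      rw [← hrec, hL]
      simp only
      rw [e]
      ring
    rw [e2]
    simp only [hL, cterm, cterm'']
    field_simp
    ring
  simp only [hterm] at hsum
  have hLs : Summable L := by
    refine ((ha.summable_cosh hx (one_lt_cosh_mul hα hs)).mul_left
      (|D| * (4 * α ^ 2) * (A ^ 2 + 1))).of_norm_bounded fun k => ?_
    have hk : 0 < x₀ + (k : ℝ) := by positivity
    have hp := Real.rpow_pos_of_pos hc (-(2 * (x₀ + k)))
    have h1 : |A ^ 2 - (x₀ + k) ^ 2| ≤ (A ^ 2 + 1) * (1 + (x₀ + k)) ^ 2 := by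
      have := mul_nonneg (sq_nonneg A) (show 0 ≤ (x₀ + (k : ℝ)) * 2 + (x₀ + k) ^ 2 by positivity)
      rw [abs_le]; constructor <;> nlinarith [sq_nonneg A]
    rw [Real.norm_eq_abs, hL]
    simp only
    rw [abs_mul, abs_of_pos hp, abs_mul, abs_mul, abs_mul,
      abs_of_nonneg (show 0 ≤ 4 * α ^ 2 by positivity)]
    calc _ ≤ |D| * (4 * α ^ 2) * ((A ^ 2 + 1) * (1 + (x₀ + k)) ^ 2) * |a k| *
          Real.cosh (α * s) ^ (-(2 * (x₀ + k))) := by gcongr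
      _ = _ := by ring
  have htel := hLs.hasSum.sub ((hasSum_nat_add_iff' 1).mpr hLs.hasSum)
  have := hsum.unique htel
  simp only [Finset.sum_range_one, sub_sub_cancel] at this
  simp only [cser, cser'']
  rw [this]
  simp [hL]

/-- A hyperbolic series with nonzero leading coefficient does not vanish identically. -/
lemma cser_ne_zero (h0 : a 0 ≠ 0) : ∃ s, 0 < s ∧ cser a α x₀ s ≠ 0 := by
  obtain ⟨C, hC0, hC⟩ := cser_decay ha.shift hα (x₀ := x₀ + 1) (by positivity)
  by_contra! hcon
  have hlim : Tendsto (fun s : ℝ => Real.cosh (α * s)) atTop atTop :=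
    tendsto_cosh_atTop'.comp (tendsto_id.const_mul_atTop hα)
  obtain ⟨s, hs1, hs2⟩ := ((eventually_ge_atTop 1).and
    (hlim.eventually_gt_atTop (C / |a 0| + 1))).exists
  have hs : 0 < s := by linarith
  have hc := Real.cosh_pos (α * s)
  have hp := Real.rpow_pos_of_pos hc (-(2 * x₀))
  have hsplit : cser a α x₀ s =
      a 0 * Real.cosh (α * s) ^ (-(2 * x₀)) + cser (fun k => a (k + 1)) α (x₀ + 1) s := by
    rw [cser, (summable_cterm ha hα hx hs).tsum_eq_zero_add]
    simp only [cser, cterm]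
    congr 1
    · simp
    · refine tsum_congr fun k => ?_
      push_cast
      ring_nf
  have e : Real.cosh (α * s) ^ (-(2 * (x₀ + 1))) =
      Real.cosh (α * s) ^ (-(2 * x₀)) * (Real.cosh (α * s) ^ 2)⁻¹ := by
    have := cosh_rpow_split (Real.cosh (α * s)) x₀ hc 1
    simpa using this
  have h1 := (hC s hs1).1
  rw [hcon s hs] at hsplit
  rw [show cser (fun k => a (k + 1)) α (x₀ + 1) s = -(a 0 * Real.cosh (α * s) ^ (-(2 * x₀))) by
    linarith, abs_neg, abs_mul, abs_of_pos hp, e] at h1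
  have h2 : |a 0| ≤ C * (Real.cosh (α * s) ^ 2)⁻¹ := by
    refine le_of_mul_le_mul_right ?_ hp
    linarith
  have ha0 := abs_pos.mpr h0
  rw [← div_eq_mul_inv, le_div_iff₀ (by positivity)] at h2
  have h3 : C / |a 0| < Real.cosh (α * s) ^ 2 := by
    have := Real.one_le_cosh (α * s)
    nlinarith
  rw [div_lt_iff₀ ha0] at h3
  linarith

end Series

/-! ### Linear second-order equations on the half-line -/

/-- Two-sided Grönwall comparison for a function whose logarithmic derivative is bounded. -/
lemma energy_compare {E E' : ℝ → ℝ} {L : ℝ} (hE : ∀ s, 0 < s → HasDerivAt E (E' s) s)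
    (hb : ∀ s, 0 < s → |E' s| ≤ L * E s) {s t : ℝ} (hs : 0 < s) (hst : s ≤ t) :
    E s * Real.exp (L * s) ≤ E t * Real.exp (L * t) ∧
      E t * Real.exp (-L * t) ≤ E s * Real.exp (-L * s) := by
  have hexp : ∀ c s : ℝ, HasDerivAt (fun s => Real.exp (c * s)) (Real.exp (c * s) * c) s := by
    intro c s
    simpa using ((hasDerivAt_id s).const_mul c).exp
  have hd : ∀ c s : ℝ, 0 < s → HasDerivAt (fun s => E s * Real.exp (c * s))
      ((E' s + c * E s) * Real.exp (c * s)) s := by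
    intro c s hs
    exact ((hE s hs).mul (hexp c s)).congr_deriv (by ring)
  have hcont : ∀ c : ℝ, ContinuousOn (fun s => E s * Real.exp (c * s)) (Set.Ioi 0) := fun c x hx =>
    (hd c x hx).continuousAt.continuousWithinAt
  have hdiff : ∀ c : ℝ, DifferentiableOn ℝ (fun s => E s * Real.exp (c * s))
      (interior (Set.Ioi 0)) := fun c x hx => by
    rw [interior_Ioi] at hx
    exact (hd c x hx).differentiableAt.differentiableWithinAt
  constructor
  · refine monotoneOn_of_deriv_nonneg (convex_Ioi 0) (hcont L) (hdiff L) (fun x hx => ?_)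
      hs (hs.trans_le hst) hst
    rw [interior_Ioi] at hx
    rw [(hd L x hx).deriv]
    have := (abs_le.mp (hb x hx)).1
    exact mul_nonneg (by linarith) (Real.exp_pos _).le
  · refine antitoneOn_of_deriv_nonpos (convex_Ioi 0) (hcont (-L)) (hdiff (-L)) (fun x hx => ?_)
      hs (hs.trans_le hst) hst
    rw [interior_Ioi] at hx
    rw [(hd (-L) x hx).deriv]
    have := (abs_le.mp (hb x hx)).2
    exact mul_nonpos_of_nonpos_of_nonneg (by linarith) (Real.exp_pos _).le

/-- `h` and `h₁ = h'` solve `h'' = Q h + F` on `(0,∞)`. -/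
def SolvesOde (Q F h h₁ : ℝ → ℝ) : Prop :=
  ∀ s, 0 < s → HasDerivAt h (h₁ s) s ∧ HasDerivAt h₁ (Q s * h s + F s) s

lemma SolvesOde.continuousOn {Q F h h₁ : ℝ → ℝ} (H : SolvesOde Q F h h₁) :
    ContinuousOn h (Set.Ioi 0) ∧ ContinuousOn h₁ (Set.Ioi 0) :=
  ⟨fun x hx => (H x hx).1.continuousAt.continuousWithinAt,
    fun x hx => (H x hx).2.continuousAt.continuousWithinAt⟩

lemma SolvesOde.lin {Q F G h h₁ k k₁ : ℝ → ℝ} (H : SolvesOde Q F h h₁) (K : SolvesOde Q G k k₁)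
    (x y : ℝ) : SolvesOde Q (fun s => x * F s + y * G s) (fun s => x * h s + y * k s)
      (fun s => x * h₁ s + y * k₁ s) := fun s hs =>
  ⟨((H s hs).1.const_mul x).add ((K s hs).1.const_mul y),
    (((H s hs).2.const_mul x).add ((K s hs).2.const_mul y)).congr_deriv (by ring)⟩

/-- Solutions of an equation with bounded data stay bounded up to the endpoint `0`. -/
lemma SolvesOde.bounded {Q F h h₁ : ℝ → ℝ} (H : SolvesOde Q F h h₁) {K : ℝ}
    (hQ : ∀ s, 0 < s → |Q s| ≤ K) (hF : ∀ s, 0 < s → |F s| ≤ K) :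
    ∃ C, 0 ≤ C ∧ ∀ s, 0 < s → s ≤ 1 → |h s| ≤ C ∧ |h₁ s| ≤ C := by
  have hK : 0 ≤ K := (abs_nonneg _).trans (hQ 1 one_pos)
  set E : ℝ → ℝ := fun s => h s ^ 2 + h₁ s ^ 2 + 1 with hEdef
  have hE : ∀ s, 0 < s → HasDerivAt E
      (2 * h s * h₁ s + 2 * h₁ s * (Q s * h s + F s)) s := by
    intro s hs
    obtain ⟨d1, d2⟩ := H s hs
    exact (((d1.pow 2).add (d2.pow 2)).add_const 1).congr_deriv (by push_cast; ring)
  have hb : ∀ s, 0 < s → |2 * h s * h₁ s + 2 * h₁ s * (Q s * h s + F s)| ≤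
      (1 + 2 * K) * E s := by
    intro s hs
    have e1 : |2 * h s * h₁ s| ≤ h s ^ 2 + h₁ s ^ 2 := by
      rw [abs_le]; constructor <;> nlinarith [sq_nonneg (h s + h₁ s), sq_nonneg (h s - h₁ s)]
    have e2 : |2 * h₁ s| ≤ h₁ s ^ 2 + 1 := by
      rw [abs_le]; constructor <;> nlinarith [sq_nonneg (h₁ s + 1), sq_nonneg (h₁ s - 1)]
    have e3 : |Q s * (2 * h s * h₁ s)| ≤ K * (h s ^ 2 + h₁ s ^ 2) := by
      rw [abs_mul]; exact mul_le_mul (hQ s hs) e1 (abs_nonneg _) hK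
    have e4 : |F s * (2 * h₁ s)| ≤ K * (h₁ s ^ 2 + 1) := by
      rw [abs_mul]; exact mul_le_mul (hF s hs) e2 (abs_nonneg _) hK
    rw [show 2 * h s * h₁ s + 2 * h₁ s * (Q s * h s + F s) =
      2 * h s * h₁ s + Q s * (2 * h s * h₁ s) + F s * (2 * h₁ s) by ring]
    refine (abs_add_three _ _ _).trans ?_
    simp only [hEdef]
    nlinarith [sq_nonneg (h s), sq_nonneg (h₁ s), mul_nonneg hK (sq_nonneg (h s)),
      mul_nonneg hK (sq_nonneg (h₁ s))]
  refine ⟨E 1 * Real.exp ((1 + 2 * K) * 1), by positivity, fun s hs hs1 => ?_⟩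
  have hc := (energy_compare hE hb hs hs1).1
  have hE1 : E s ≤ E 1 * Real.exp ((1 + 2 * K) * 1) := by
    refine le_trans ?_ hc
    exact le_mul_of_one_le_right (by positivity) (Real.one_le_exp (by positivity))
  constructor <;> refine le_trans ?_ hE1 <;> rw [abs_le] <;> simp only [hEdef] <;>
    constructor <;> nlinarith [sq_nonneg (h s + 1), sq_nonneg (h s - 1), sq_nonneg (h₁ s + 1),
      sq_nonneg (h₁ s - 1), sq_nonneg (h s), sq_nonneg (h₁ s)]

/-- Vanishing Cauchy data at one interior point force a homogeneous solution to vanish. -/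
lemma SolvesOde.eq_zero {Q h h₁ : ℝ → ℝ} (H : SolvesOde Q (fun _ => 0) h h₁) {K : ℝ}
    (hQ : ∀ s, 0 < s → |Q s| ≤ K) {t : ℝ} (ht : 0 < t) (h0 : h t = 0) (h1 : h₁ t = 0) :
    ∀ s, 0 < s → h s = 0 := by
  have hK : 0 ≤ K := (abs_nonneg _).trans (hQ 1 one_pos)
  set E : ℝ → ℝ := fun s => h s ^ 2 + h₁ s ^ 2 with hEdef
  have hE : ∀ s, 0 < s → HasDerivAt E
      (2 * h s * h₁ s + Q s * (2 * h s * h₁ s)) s := by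
    intro s hs
    obtain ⟨d1, d2⟩ := H s hs
    exact ((d1.pow 2).add (d2.pow 2)).congr_deriv (by push_cast; ring)
  have hb : ∀ s, 0 < s → |2 * h s * h₁ s + Q s * (2 * h s * h₁ s)| ≤ (1 + K) * E s := by
    intro s hs
    have e1 : |2 * h s * h₁ s| ≤ h s ^ 2 + h₁ s ^ 2 := by
      rw [abs_le]; constructor <;> nlinarith [sq_nonneg (h s + h₁ s), sq_nonneg (h s - h₁ s)]
    have e3 : |Q s * (2 * h s * h₁ s)| ≤ K * (h s ^ 2 + h₁ s ^ 2) := by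
      rw [abs_mul]; exact mul_le_mul (hQ s hs) e1 (abs_nonneg _) hK
    refine (abs_add_le _ _).trans ?_
    simp only [hEdef]
    linarith
  have hEt : E t = 0 := by simp [hEdef, h0, h1]
  intro s hs
  have hEs : E s ≤ 0 := by
    rcases le_total s t with hst | hst
    · have := (energy_compare hE hb hs hst).1
      rw [hEt, zero_mul] at this
      exact nonpos_of_mul_nonpos_left this (Real.exp_pos _)
    · have := (energy_compare hE hb ht hst).2
      rw [hEt, zero_mul] at this
      exact nonpos_of_mul_nonpos_left this (Real.exp_pos _)
  simp only [hEdef] at hEs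
  nlinarith [sq_nonneg (h s), sq_nonneg (h₁ s)]

/-- Two square-integrable homogeneous solutions are proportional: their Wronskian is constant and
integrable on the half-line, hence zero. -/
lemma SolvesOde.proportional {Q h h₁ p p₁ : ℝ → ℝ} (H : SolvesOde Q (fun _ => 0) h h₁)
    (P : SolvesOde Q (fun _ => 0) p p₁) {K : ℝ} (hQ : ∀ s, 0 < s → |Q s| ≤ K)
    (mh : MemLp h 2 (volume.restrict (Set.Ioi 0))) (mh₁ : MemLp h₁ 2 (volume.restrict (Set.Ioi 0)))
    (mp : MemLp p 2 (volume.restrict (Set.Ioi 0))) (mp₁ : MemLp p₁ 2 (volume.restrict (Set.Ioi 0)))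
    {t : ℝ} (ht : 0 < t) (hpt : p t ≠ 0) :
    ∃ τ : ℝ, ∀ s, 0 < s → h s = τ * p s := by
  set W : ℝ → ℝ := fun s => h s * p₁ s - h₁ s * p s with hW
  have hWd : ∀ s, 0 < s → HasDerivAt W 0 s := by
    intro s hs
    obtain ⟨d1, d2⟩ := H s hs
    obtain ⟨e1, e2⟩ := P s hs
    exact ((d1.mul e2).sub (d2.mul e1)).congr_deriv (by ring)
  have hconst : ∀ s, 0 < s → W s = W t := fun s hs =>
    isOpen_Ioi.is_const_of_deriv_eq_zero isPreconnected_Ioi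
      (fun x hx => (hWd x hx).differentiableAt.differentiableWithinAt)
      (fun x hx => (hWd x hx).deriv) hs ht
  have hWint : IntegrableOn W (Set.Ioi 0) := (mh.integrable_mul mp₁).sub (mh₁.integrable_mul mp)
  have hWt : W t = 0 := by
    have h2 : IntegrableOn (fun _ : ℝ => W t) (Set.Ioi 0) :=
      hWint.congr_fun (fun s hs => hconst s hs) measurableSet_Ioi
    rw [integrableOn_const_iff] at h2
    simpa using h2
  refine ⟨h t / p t, fun s hs => ?_⟩
  have hz := (H.lin P 1 (-(h t / p t)))
  simp only [mul_zero, add_zero] at hz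
  have := hz.eq_zero hQ ht (by field_simp; ring) (by
    simp only [hW] at hWt
    field_simp
    linarith) s hs
  linarith

lemma memLp_of_decay {α x C : ℝ} (hα : 0 < α) (hx : 0 < x) {h : ℝ → ℝ}
    (hc : ContinuousOn h (Set.Ioi 0))
    (hb : ∀ s, 0 < s → |h s| ≤ C * Real.cosh (α * s) ^ (-(2 * x))) :
    MemLp h 2 (volume.restrict (Set.Ioi 0)) := by
  have hm : AEStronglyMeasurable h (volume.restrict (Set.Ioi 0)) :=
    hc.aestronglyMeasurable measurableSet_Ioi
  rw [memLp_two_iff_integrable_sq hm]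
  have hC : 0 ≤ C := by
    have := (abs_nonneg _).trans (hb 1 one_pos)
    exact nonneg_of_mul_nonneg_left this (Real.rpow_pos_of_pos (Real.cosh_pos _) _)
  have hi : IntegrableOn (fun s => (C * 2 ^ (2 * x)) ^ 2 * Real.exp (-(4 * x * α) * s))
      (Set.Ioi 0) := (exp_neg_integrableOn_Ioi 0 (by positivity)).const_mul _
  refine hi.mono' (hm.pow 2) ?_
  filter_upwards [ae_restrict_mem measurableSet_Ioi] with s hs
  have h1 : Real.cosh (α * s) ^ (-(2 * x)) ≤ 2 ^ (2 * x) * Real.exp (-(2 * x * α) * s) := by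
    have := Real.rpow_le_rpow_of_nonpos (by positivity) (half_exp_le_cosh (α * s))
      (show -(2 * x) ≤ 0 by linarith)
    refine this.trans (le_of_eq ?_)
    rw [Real.div_rpow (Real.exp_pos _).le two_pos.le, Real.rpow_neg two_pos.le, div_inv_eq_mul,
      ← Real.exp_mul, mul_comm]
    ring_nf
  have h2 := (hb s hs).trans (mul_le_mul_of_nonneg_left h1 hC)
  rw [Real.norm_eq_abs, abs_pow]
  refine (pow_le_pow_left₀ (abs_nonneg _) h2 2).trans (le_of_eq ?_)
  rw [show -(4 * x * α) * s = -(2 * x * α) * s + -(2 * x * α) * s by ring, Real.exp_add]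
  ring

/-- A hyperbolic series that solves an equation with bounded data lies, with its derivative, in
`L²(0,∞)`: Grönwall controls it near `0`, the leading term controls it on `[1,∞)`. -/
lemma cser_memLp {a : ℕ → ℝ} (ha : RatioOne a) {α x₀ : ℝ} (hα : 0 < α) (hx : 0 < x₀)
    {Q F : ℝ → ℝ} (H : SolvesOde Q F (cser a α x₀) (cser' a α x₀)) {K : ℝ}
    (hQ : ∀ s, 0 < s → |Q s| ≤ K) (hF : ∀ s, 0 < s → |F s| ≤ K) :
    MemLp (cser a α x₀) 2 (volume.restrict (Set.Ioi 0)) ∧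
      MemLp (cser' a α x₀) 2 (volume.restrict (Set.Ioi 0)) := by
  obtain ⟨C, hC0, hC⟩ := H.bounded hQ hF
  obtain ⟨D, hD0, hD⟩ := cser_decay ha hα hx
  have hm := Real.rpow_pos_of_pos (Real.cosh_pos (α * 1)) (-(2 * x₀))
  set m := Real.cosh (α * 1) ^ (-(2 * x₀)) with hmdef
  have key : ∀ s, 0 < s → ∀ v : ℝ, (s ≤ 1 → v ≤ C) →
      (1 ≤ s → v ≤ D * Real.cosh (α * s) ^ (-(2 * x₀))) →
      v ≤ (C / m + D) * Real.cosh (α * s) ^ (-(2 * x₀)) := by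
    intro s hs v h1 h2
    have hp := Real.rpow_pos_of_pos (Real.cosh_pos (α * s)) (-(2 * x₀))
    have hCm : 0 ≤ C / m := by positivity
    rcases le_total s 1 with h | h
    · have hle := cosh_rpow_le hα hx.le hs h
      have : C ≤ C / m * Real.cosh (α * s) ^ (-(2 * x₀)) := by
        calc C = C / m * m := by field_simp
          _ ≤ _ := by gcongr
      nlinarith [h1 h, mul_nonneg hD0 hp.le]
    · nlinarith [h2 h, mul_nonneg hCm hp.le]
  exact ⟨memLp_of_decay hα hx H.continuousOn.1 fun s hs =>
      key s hs _ (fun h => (hC s hs h).1) (fun h => (hD s h).1),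
    memLp_of_decay hα hx H.continuousOn.2 fun s hs =>
      key s hs _ (fun h => (hC s hs h).2) (fun h => (hD s h).2)⟩

/-! ### The parameters of the equation -/

lemma Ufun_rpow {q Λ : ℝ} (hq : 2 < q) (hΛ : 0 < Λ) (p s : ℝ) :
    Ufun q Λ s ^ p = betaV q Λ ^ p * Real.cosh (alphaV q Λ * s) ^ (-(2 * (p / (q - 2)))) := by
  have hβ : 0 ≤ betaV q Λ := Real.rpow_nonneg (by positivity) _
  have hc := Real.cosh_pos (alphaV q Λ * s)
  rw [Ufun, Real.mul_rpow hβ (Real.rpow_nonneg hc.le _), ← Real.rpow_mul hc.le]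
  congr 2
  ring

lemma Ufun_rpow_sub_two {q Λ : ℝ} (hq : 2 < q) (hΛ : 0 < Λ) (s : ℝ) :
    Ufun q Λ s ^ (q - 2) = q * Λ / 2 / Real.cosh (alphaV q Λ * s) ^ 2 := by
  have h2 : q - 2 ≠ 0 := by linarith
  have hc := Real.cosh_pos (alphaV q Λ * s)
  rw [Ufun_rpow hq hΛ, betaV, ← Real.rpow_mul (by positivity), one_div_mul_cancel h2, Real.rpow_one,
    div_self h2, Real.rpow_neg hc.le, mul_one, Real.rpow_two]
  rfl

lemma alphaV_pos {q Λ : ℝ} (hq : 2 < q) (hΛ : 0 < Λ) : 0 < alphaV q Λ :=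
  mul_pos (by linarith) (Real.sqrt_pos.mpr hΛ)

lemma alphaV_sq {q Λ : ℝ} (hΛ : 0 < Λ) : alphaV q Λ ^ 2 = (q - 2) ^ 2 * Λ / 4 := by
  rw [alphaV, mul_pow, Real.sq_sqrt hΛ.le]; ring

lemma afrak_pos (d : ℕ) {q Λ : ℝ} (hq : 2 < q) (hΛ : 0 < Λ) : 0 < afrak d q Λ :=
  div_pos (Real.sqrt_pos.mpr (by positivity)) (by linarith)

lemma afrak_sq (d : ℕ) {q Λ : ℝ} (hΛ : 0 < Λ) :
    afrak d q Λ ^ 2 = (1 + 2 * d / Λ) / (q - 2) ^ 2 := by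
  rw [afrak, div_pow, Real.sq_sqrt (by positivity)]

lemma four_alpha_sq_a_sq (d : ℕ) {q Λ : ℝ} (hq : 2 < q) (hΛ : 0 < Λ) :
    4 * alphaV q Λ ^ 2 * afrak d q Λ ^ 2 = 2 * d + Λ := by
  have h2 : q - 2 ≠ 0 := by linarith
  rw [alphaV_sq hΛ, afrak_sq d hΛ]
  field_simp
  ring

/-- The Felli–Schneider condition excludes resonance between the inhomogeneity and the decaying
homogeneous solution. -/
lemma afrak_lt_bfrak {d : ℕ} (hd : 2 ≤ d) {q Λ : ℝ} (hq : 2 < q)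
    (hΛ : 0 < Λ) (hFS : Λ = 4 * ((d : ℝ) - 1) / (q ^ 2 - 4)) : afrak d q Λ < bfrak q := by
  have hd' : (2 : ℝ) ≤ d := by exact_mod_cast hd
  have hd1 : 0 < (d : ℝ) - 1 := by linarith
  have hq4 : 0 < q ^ 2 - 4 := by nlinarith
  rw [afrak, bfrak]
  refine div_lt_div_of_pos_right ?_ (by linarith)
  rw [Real.sqrt_lt' (by linarith)]
  -- `d/(2(d-1)) ≤ 1`, so the radicand is at most `q² - 3`.
  have h1 : 2 * d / Λ ≤ q ^ 2 - 4 := by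
    rw [div_le_iff₀ hΛ, hFS, mul_div_cancel₀ _ hq4.ne']
    linarith
  nlinarith [mul_pos (sub_pos.mpr hq) (sub_pos.mpr hq)]

lemma Gfun_tendsto (d : ℕ) {q ε : ℝ} (Λ : ℝ) (hq : 2 < q) (hε : ε < 1) :
    Tendsto (Gfun d q Λ ε) atTop (𝓝 1) := by
  have hD : 0 < 1 - ε := by linarith
  have hm : 0 < (q - 2) ^ 2 := pow_pos (by linarith) 2
  set A := afrak d q Λ with hA
  have hi : Tendsto (fun x : ℝ => x⁻¹) atTop (𝓝 0) := tendsto_inv_atTop_zero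
  have hnum : Tendsto (fun x : ℝ => (1 - ε) * (1 + (A - 1) * x⁻¹) * (2 + (2 * A - 1) * x⁻¹) *
      (q - 2) ^ 2 - q * (q - 1) * (x⁻¹ * x⁻¹)) atTop
      (𝓝 ((1 - ε) * (1 + (A - 1) * 0) * (2 + (2 * A - 1) * 0) *
      (q - 2) ^ 2 - q * (q - 1) * (0 * 0))) :=
    (((((hi.const_mul _).const_add _).const_mul _).mul ((hi.const_mul _).const_add _)).mul_const
      _).sub ((hi.mul hi).const_mul _)
  have hden : Tendsto (fun x : ℝ => 2 * (1 - ε) * (1 + 2 * A * x⁻¹) * (q - 2) ^ 2) atTop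
      (𝓝 (2 * (1 - ε) * (1 + 2 * A * 0) * (q - 2) ^ 2)) :=
    (((hi.const_mul _).const_add _).const_mul _).mul_const _
  have h := hnum.div hden (by simp only [mul_zero, add_zero, mul_one]; positivity)
  have e : ((1 - ε) * (1 + (A - 1) * 0) * (2 + (2 * A - 1) * 0) *
      (q - 2) ^ 2 - q * (q - 1) * (0 * 0)) / (2 * (1 - ε) * (1 + 2 * A * 0) * (q - 2) ^ 2) = 1 := by
    simp only [mul_zero, add_zero, mul_one, sub_zero]
    rw [div_eq_one_iff_eq (by positivity)]
    ring
  rw [e] at h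
  refine h.congr' ?_
  filter_upwards [eventually_gt_atTop 0] with x hx
  simp only [Pi.div_apply, Gfun, ← hA]
  rw [← mul_div_mul_left _ _ (show x ^ 2 ≠ 0 by positivity)]
  congr 1 <;> field_simp
  ring

/-- The defining relation of `Gfun`: it is the two-term recursion of the hyperbolic series with
exponent `x + 𝔞`. -/
lemma Gfun_rec (d : ℕ) {q Λ ε : ℝ} (hq : 2 < q) (hΛ : 0 < Λ) (hε : ε < 1) {x : ℝ} (hx : 0 < x) :
    (1 - ε) * (4 * alphaV q Λ ^ 2) * ((x + afrak d q Λ) ^ 2 - afrak d q Λ ^ 2) * Gfun d q Λ ε x =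
      (1 - ε) * alphaV q Λ ^ 2 * (2 * (x + afrak d q Λ - 1)) * (2 * (x + afrak d q Λ - 1) + 1) -
        q * (q - 1) * Λ / 2 := by
  have hD : 1 - ε ≠ 0 := by linarith
  have h2 : q - 2 ≠ 0 := by linarith
  have hA := afrak_pos d hq hΛ
  have hxa : x + 2 * afrak d q Λ ≠ 0 := by positivity
  rw [alphaV_sq hΛ, Gfun]
  field_simp
  ring

lemma Aseq_ratio (d : ℕ) {q ε : ℝ} (Λ : ℝ) (hq : 2 < q) (hε : ε < 1) :
    RatioOne (Aseq d q Λ ε) :=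
  ⟨fun k => Gfun d q Λ ε ((k : ℝ) + 1), fun _ => rfl, (Gfun_tendsto d Λ hq hε).comp
    (tendsto_atTop_add_const_right _ _ tendsto_natCast_atTop_atTop)⟩

lemma Bseq_ratio (d : ℕ) {q ε : ℝ} (Λ : ℝ) (hq : 2 < q) (hε : ε < 1) :
    RatioOne (Bseq d q Λ ε) :=
  ⟨fun k => Gfun d q Λ ε (((k : ℝ) + 1) + bfrak q - afrak d q Λ), fun _ => rfl,
    (Gfun_tendsto d Λ hq hε).comp (by
      simp only [add_sub_assoc]
      exact tendsto_atTop_add_const_right _ _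
        (tendsto_atTop_add_const_right _ _ tendsto_natCast_atTop_atTop))⟩

/-- The potential in the normal form `g'' = Q g + F` of the equation. -/
noncomputable def Qfun (d : ℕ) (q Λ ε : ℝ) (s : ℝ) : ℝ :=
  2 * d + Λ - q * (q - 1) * Λ / 2 / (1 - ε) / Real.cosh (alphaV q Λ * s) ^ 2

lemma Qfun_continuous (d : ℕ) (q Λ ε : ℝ) : Continuous (Qfun d q Λ ε) := by
  unfold Qfun
  refine continuous_const.sub (continuous_const.div (by fun_prop) fun s => ?_)
  have := Real.cosh_pos (alphaV q Λ * s)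
  positivity

lemma Qfun_bound (d : ℕ) (q Λ ε : ℝ) (s : ℝ) :
    |Qfun d q Λ ε s| ≤ |2 * d + Λ| + |q * (q - 1) * Λ / 2 / (1 - ε)| := by
  have hc := Real.one_le_cosh (alphaV q Λ * s)
  rw [Qfun]
  refine (abs_sub _ _).trans (add_le_add_right ?_ _)
  rw [abs_div]
  refine div_le_self (abs_nonneg _) ?_
  rw [abs_of_nonneg (by positivity)]
  nlinarith

lemma f2fun_eq {d : ℕ} {q Λ : ℝ} (hq : 2 < q) (hΛ : 0 < Λ) (s : ℝ) :
    f2fun d q Λ s = Mconst d q * betaV q Λ ^ (2 * q - 3) *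
    Real.sqrt (2 * ((d : ℝ) - 1) / ((d : ℝ) + 2)) *
      Real.cosh (alphaV q Λ * s) ^ (-(2 * bfrak q)) := by
  rw [f2fun, Ufun_rpow hq hΛ, bfrak]; ring

lemma cser_eq (a : ℕ → ℝ) (α x s : ℝ) : cser a α x s =
    Real.cosh (α * s) ^ (-(2 * x)) * ∑' k : ℕ, a k * (Real.cosh (α * s) ^ (2 * k))⁻¹ := by
  rw [cser, ← tsum_mul_left]
  refine tsum_congr fun k => ?_
  rw [cterm, cosh_rpow_split _ x (Real.cosh_pos _), inv_pow, pow_mul]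
  ring

lemma gSol_eq {d : ℕ} {q Λ ε : ℝ} (hq : 2 < q) (hΛ : 0 < Λ) (τ s : ℝ) : gSol d q Λ ε τ s =
    τ * betaV q Λ ^ Real.sqrt (1 + 2 * d / Λ) *
      cser (Aseq d q Λ ε) (alphaV q Λ) (afrak d q Λ) s +
    -(etaV d q Λ ε * (Mconst d q * betaV q Λ ^ (2 * q - 3) *
      Real.sqrt (2 * ((d : ℝ) - 1) / ((d : ℝ) + 2)))) *
      cser (Bseq d q Λ ε) (alphaV q Λ) (bfrak q) s := by
  rw [gSol, f2fun_eq hq hΛ, cser_eq, cser_eq, Ufun_rpow hq hΛ, afrak]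
  ring

lemma cosh_rpow_memLp {q Λ : ℝ} (hq : 2 < q) (hΛ : 0 < Λ) {x : ℝ} (hx : 0 < x) :
    MemLp (fun s => Real.cosh (alphaV q Λ * s) ^ (-(2 * x))) 2
      (volume.restrict (Set.Ioi 0)) :=
  memLp_of_decay (C := 1) (alphaV_pos hq hΛ) hx
    (fun s _ => (hasDerivAt_cosh_rpow _ _ s).continuousAt.continuousWithinAt) fun s _ => by
      rw [one_mul, abs_of_pos (Real.rpow_pos_of_pos (Real.cosh_pos _) _)]

/-! ### The solution family -/

section Solutions

variable {d : ℕ} {q Λ ε : ℝ} (hq : 2 < q) (hΛ : 0 < Λ) (hε : ε < 1)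
include hq hΛ hε

lemma solves_of_rec {a : ℕ → ℝ} (ha : RatioOne a) {x₀ : ℝ} (hx : 0 < x₀)
    (hrec : ∀ k : ℕ, (1 - ε) * (4 * alphaV q Λ ^ 2) *
        ((x₀ + (k + 1 : ℕ)) ^ 2 - afrak d q Λ ^ 2) * a (k + 1) =
      ((1 - ε) * alphaV q Λ ^ 2 * (2 * (x₀ + k)) * (2 * (x₀ + k) + 1) -
        q * (q - 1) * Λ / 2) * a k) :
    SolvesOde (Qfun d q Λ ε)
      (fun s => 4 * alphaV q Λ ^ 2 * (x₀ ^ 2 - afrak d q Λ ^ 2) * a 0 *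
        Real.cosh (alphaV q Λ * s) ^ (-(2 * x₀)))
      (cser a (alphaV q Λ) x₀) (cser' a (alphaV q Λ) x₀) := by
  intro s hs
  have hα := alphaV_pos hq hΛ
  refine ⟨hasDerivAt_cser ha hα hx hs, (hasDerivAt_cser' ha hα hx hs).congr_deriv ?_⟩
  have hD : 1 - ε ≠ 0 := by linarith
  have hc := Real.cosh_pos (alphaV q Λ * s)
  have h := cser_ode ha hα hx hrec hs
  rw [four_alpha_sq_a_sq d hq hΛ] at h
  refine mul_left_cancel₀ hD ?_
  rw [Qfun]
  have e : (1 - ε) * (q * (q - 1) * Λ / 2 / (1 - ε) / Real.cosh (alphaV q Λ * s) ^ 2) =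
      q * (q - 1) * Λ / 2 / Real.cosh (alphaV q Λ * s) ^ 2 := by field_simp
  linear_combination (-1 : ℝ) * h + cser a (alphaV q Λ) x₀ s * e

lemma solves_A : SolvesOde (Qfun d q Λ ε) (fun _ => 0)
    (cser (Aseq d q Λ ε) (alphaV q Λ) (afrak d q Λ))
    (cser' (Aseq d q Λ ε) (alphaV q Λ) (afrak d q Λ)) := by
  have h := solves_of_rec (d := d) hq hΛ hε (Aseq_ratio d Λ hq hε) (afrak_pos d hq hΛ) (fun k => by
    have := Gfun_rec d hq hΛ hε (x := (k : ℝ) + 1) (by positivity)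
    simp only [Aseq]
    push_cast
    linear_combination Aseq d q Λ ε k * this)
  simpa using h

lemma solves_B (hab : afrak d q Λ < bfrak q) : SolvesOde (Qfun d q Λ ε)
    (fun s => 4 * alphaV q Λ ^ 2 * (bfrak q ^ 2 - afrak d q Λ ^ 2) *
        Real.cosh (alphaV q Λ * s) ^ (-(2 * bfrak q)))
    (cser (Bseq d q Λ ε) (alphaV q Λ) (bfrak q))
    (cser' (Bseq d q Λ ε) (alphaV q Λ) (bfrak q)) := by
  have hA := afrak_pos d hq hΛ
  have h := solves_of_rec (d := d) hq hΛ hε (Bseq_ratio d Λ hq hε) (hA.trans hab) (fun k => by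
    have hp : 0 < ((k : ℝ) + 1) + bfrak q - afrak d q Λ := by
      have : (0 : ℝ) ≤ k := k.cast_nonneg
      linarith
    have := Gfun_rec d hq hΛ hε hp
    simp only [Bseq]
    push_cast
    linear_combination Bseq d q Λ ε k * this)
  simpa [Bseq] using h

/-- Every member of the family solves the equation in normal form and lies in `H¹(0,∞)`. -/
lemma gSol_solves (hab : afrak d q Λ < bfrak q) (τ : ℝ) :
    ∃ h₁ : ℝ → ℝ, SolvesOde (Qfun d q Λ ε) (fun s => -(f2fun d q Λ s / (1 - ε)))
        (gSol d q Λ ε τ) h₁ ∧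
      MemLp (gSol d q Λ ε τ) 2 (volume.restrict (Set.Ioi 0)) ∧
      MemLp h₁ 2 (volume.restrict (Set.Ioi 0)) := by
  have hA := afrak_pos d hq hΛ
  have hB := hA.trans hab
  have hα := alphaV_pos hq hΛ
  have sA := solves_A (d := d) hq hΛ hε
  have sB := solves_B hq hΛ hε hab
  obtain ⟨mA, mA'⟩ := cser_memLp (Aseq_ratio d Λ hq hε) hα hA sA
    (fun s _ => Qfun_bound d q Λ ε s) (fun s _ => by simp only [abs_zero]; positivity)
  have hbd : ∀ s, 0 < s → |4 * alphaV q Λ ^ 2 * (bfrak q ^ 2 - afrak d q Λ ^ 2) *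
        Real.cosh (alphaV q Λ * s) ^ (-(2 * bfrak q))| ≤
      |4 * alphaV q Λ ^ 2 * (bfrak q ^ 2 - afrak d q Λ ^ 2)| := by
    intro s _
    rw [abs_mul]
    refine mul_le_of_le_one_right (abs_nonneg _) ?_
    rw [abs_of_pos (Real.rpow_pos_of_pos (Real.cosh_pos _) _)]
    exact Real.rpow_le_one_of_one_le_of_nonpos (Real.one_le_cosh _) (by linarith)
  obtain ⟨mB, mB'⟩ := cser_memLp (Bseq_ratio d Λ hq hε) hα hB sB
    (fun s _ => (Qfun_bound d q Λ ε s).trans (le_add_of_nonneg_right (abs_nonneg _)))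
    (fun s hs => (hbd s hs).trans (le_add_of_nonneg_left (by positivity)))
  have e := funext (gSol_eq (d := d) (ε := ε) hq hΛ τ)
  rw [e]
  have hl := sA.lin sB (τ * betaV q Λ ^ Real.sqrt (1 + 2 * d / Λ))
    (-(etaV d q Λ ε * (Mconst d q * betaV q Λ ^ (2 * q - 3) *
      Real.sqrt (2 * ((d : ℝ) - 1) / ((d : ℝ) + 2)))))
  refine ⟨fun s => τ * betaV q Λ ^ Real.sqrt (1 + 2 * d / Λ) *
      cser' (Aseq d q Λ ε) (alphaV q Λ) (afrak d q Λ) s +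
    -(etaV d q Λ ε * (Mconst d q * betaV q Λ ^ (2 * q - 3) *
      Real.sqrt (2 * ((d : ℝ) - 1) / ((d : ℝ) + 2)))) *
      cser' (Bseq d q Λ ε) (alphaV q Λ) (bfrak q) s, ?_,
    (mA.const_mul _).add (mB.const_mul _), (mA'.const_mul _).add (mB'.const_mul _)⟩
  refine fun s hs => ⟨(hl s hs).1, (hl s hs).2.congr_deriv ?_⟩
  have hD : 1 - ε ≠ 0 := by linarith
  have hab' : bfrak q ^ 2 - afrak d q Λ ^ 2 ≠ 0 := by nlinarith
  have hη : etaV d q Λ ε * (4 * alphaV q Λ ^ 2 * (bfrak q ^ 2 - afrak d q Λ ^ 2)) =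
      1 / (1 - ε) := by
    rw [etaV]; field_simp
  beta_reduce
  rw [f2fun_eq hq hΛ]
  linear_combination (-(Mconst d q * betaV q Λ ^ (2 * q - 3) *
      Real.sqrt (2 * ((d : ℝ) - 1) / ((d : ℝ) + 2)) *
      Real.cosh (alphaV q Λ * s) ^ (-(2 * bfrak q)))) * hη

/-- The equation at a point, solved for the second derivative. -/
lemma ode_iff (x y s : ℝ) :
    (1 - ε) * (-x + (2 * d + Λ) * y) - (q - 1) * Ufun q Λ s ^ (q - 2) * y = f2fun d q Λ s ↔
      x = Qfun d q Λ ε s * y + -(f2fun d q Λ s / (1 - ε)) := by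
  have hD : 1 - ε ≠ 0 := by linarith
  have hc := Real.cosh_pos (alphaV q Λ * s)
  rw [Ufun_rpow_sub_two hq hΛ, Qfun]
  constructor
  · intro h
    rw [← h]
    field_simp
    ring
  · intro h
    rw [h]
    field_simp
    ring

end Solutions

lemma continuous_f2fun (d : ℕ) {q Λ : ℝ} (hq : 2 < q) (hΛ : 0 < Λ) : Continuous (f2fun d q Λ) := by
  rw [funext (f2fun_eq (d := d) hq hΛ)]
  exact continuous_const.mul (continuous_iff_continuousAt.mpr fun s =>
    (hasDerivAt_cosh_rpow _ _ s).continuousAt)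

lemma isH2Sol_of_eqOn {d : ℕ} {q Λ ε : ℝ} (hq : 2 < q) (hΛ : 0 < Λ) (hε : ε < 1)
    (hab : afrak d q Λ < bfrak q) {τ : ℝ} {g : ℝ → ℝ}
    (hg : Set.EqOn g (gSol d q Λ ε τ) (Set.Ioi 0)) : IsH2Sol d q Λ ε g := by
  obtain ⟨h₁, H, m0, m1⟩ := gSol_solves hq hΛ hε hab τ
  have hg1 : Set.EqOn (deriv g) h₁ (Set.Ioi 0) := fun s hs =>
    (hg.deriv isOpen_Ioi hs).trans (H s hs).1.deriv
  have hg2 : Set.EqOn (deriv (deriv g)) (fun s => Qfun d q Λ ε s * gSol d q Λ ε τ s +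
      -(f2fun d q Λ s / (1 - ε))) (Set.Ioi 0) := fun s hs =>
    (hg1.deriv isOpen_Ioi hs).trans (H s hs).2.deriv
  have hcont2 : ContinuousOn (fun s => Qfun d q Λ ε s * gSol d q Λ ε τ s +
      -(f2fun d q Λ s / (1 - ε))) (Set.Ioi 0) :=
    ((Qfun_continuous d q Λ ε).continuousOn.mul H.continuousOn.1).add
      ((continuous_f2fun d hq hΛ).div_const _).neg.continuousOn
  have mF : MemLp (f2fun d q Λ) 2 (volume.restrict (Set.Ioi 0)) := by
    rw [funext (f2fun_eq (d := d) hq hΛ)]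
    exact (cosh_rpow_memLp hq hΛ ((afrak_pos d hq hΛ).trans hab)).const_mul _
  have mQ : MemLp (fun s => Qfun d q Λ ε s * gSol d q Λ ε τ s) 2
      (volume.restrict (Set.Ioi 0)) := by
    refine m0.of_le_mul (c := |2 * d + Λ| + |q * (q - 1) * Λ / 2 / (1 - ε)|)
      (((Qfun_continuous d q Λ ε).continuousOn.mul H.continuousOn.1).aestronglyMeasurable
        measurableSet_Ioi) (Eventually.of_forall fun s => ?_)
    rw [norm_mul]
    exact mul_le_mul_of_nonneg_right (Qfun_bound d q Λ ε s) (norm_nonneg _)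
  have m2 : MemLp (fun s => Qfun d q Λ ε s * gSol d q Λ ε τ s +
      -(f2fun d q Λ s / (1 - ε))) 2 (volume.restrict (Set.Ioi 0)) := by
    have := mQ.add (mF.const_mul (-(1 - ε)⁻¹))
    refine this.ae_eq (Eventually.of_forall fun s => ?_)
    simp only [Pi.add_apply]
    ring
  refine ⟨?_, ?_, ?_, ?_, ?_⟩
  · rw [show (2 : WithTop ℕ∞) = 1 + 1 by norm_num, contDiffOn_succ_iff_deriv_of_isOpen isOpen_Ioi]
    refine ⟨fun s hs => ((H s hs).1.congr_of_eventuallyEq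
      (hg.eventuallyEq_of_mem (isOpen_Ioi.mem_nhds hs))).differentiableAt.differentiableWithinAt,
      by simp, ?_⟩
    rw [show (1 : WithTop ℕ∞) = 0 + 1 by norm_num, contDiffOn_succ_iff_deriv_of_isOpen isOpen_Ioi]
    refine ⟨fun s hs => ((H s hs).2.congr_of_eventuallyEq
      (hg1.eventuallyEq_of_mem (isOpen_Ioi.mem_nhds hs))).differentiableAt.differentiableWithinAt,
      by simp, ?_⟩
    rw [contDiffOn_zero]
    exact hcont2.congr hg2
  · exact IntegrableOn.congr_fun m0.integrable_sq (fun s hs => by rw [hg hs]) measurableSet_Ioi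
  · exact IntegrableOn.congr_fun m1.integrable_sq (fun s hs => by rw [hg1 hs]) measurableSet_Ioi
  · exact IntegrableOn.congr_fun m2.integrable_sq (fun s hs => by rw [hg2 hs]) measurableSet_Ioi
  · intro s hs
    rw [ode_iff hq hΛ hε, hg2 hs, hg hs]

lemma eqOn_of_isH2Sol {d : ℕ} {q Λ ε : ℝ} (hq : 2 < q) (hΛ : 0 < Λ) (hε : ε < 1)
    (hab : afrak d q Λ < bfrak q) {g : ℝ → ℝ} (hg : IsH2Sol d q Λ ε g) :
    ∃ τ : ℝ, Set.EqOn g (gSol d q Λ ε τ) (Set.Ioi 0) := by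
  obtain ⟨hC, i0, i1, -, hode⟩ := hg
  obtain ⟨h₁, H, m0, m1⟩ := gSol_solves hq hΛ hε hab 0
  rw [show (2 : WithTop ℕ∞) = 1 + 1 by norm_num,
    contDiffOn_succ_iff_deriv_of_isOpen isOpen_Ioi] at hC
  obtain ⟨hd0, -, hC1⟩ := hC
  have hd1 := hC1.differentiableOn one_ne_zero
  have S : SolvesOde (Qfun d q Λ ε) (fun s => -(f2fun d q Λ s / (1 - ε))) g (deriv g) :=
    fun s hs => ⟨(hd0.differentiableAt (isOpen_Ioi.mem_nhds hs)).hasDerivAt,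
      (hd1.differentiableAt (isOpen_Ioi.mem_nhds hs)).hasDerivAt.congr_deriv
        ((ode_iff hq hΛ hε _ _ _).mp (hode s hs))⟩
  have mg : MemLp g 2 (volume.restrict (Set.Ioi 0)) :=
    (memLp_two_iff_integrable_sq (S.continuousOn.1.aestronglyMeasurable measurableSet_Ioi)).mpr i0
  have mg' : MemLp (deriv g) 2 (volume.restrict (Set.Ioi 0)) :=
    (memLp_two_iff_integrable_sq (S.continuousOn.2.aestronglyMeasurable measurableSet_Ioi)).mpr i1
  have hA := afrak_pos d hq hΛ
  have hα := alphaV_pos hq hΛ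
  have sA := solves_A (d := d) hq hΛ hε
  obtain ⟨mA, mA'⟩ := cser_memLp (Aseq_ratio d Λ hq hε) hα hA sA
    (fun s _ => Qfun_bound d q Λ ε s) (fun s _ => by simp only [abs_zero]; positivity)
  obtain ⟨t, ht, hne⟩ := cser_ne_zero (Aseq_ratio d Λ hq hε) hα hA (by simp [Aseq])
  have hdiff := S.lin H 1 (-1)
  have hz : (fun s => 1 * -(f2fun d q Λ s / (1 - ε)) + -1 * -(f2fun d q Λ s / (1 - ε))) =
      fun _ => (0 : ℝ) := by funext s; ring
  rw [hz] at hdiff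
  obtain ⟨τ, hτ⟩ := hdiff.proportional sA (fun s _ => Qfun_bound d q Λ ε s)
    ((mg.const_mul 1).add (m0.const_mul (-1))) ((mg'.const_mul 1).add (m1.const_mul (-1)))
    mA mA' ht hne
  -- The coefficient of `gSol` multiplies a power of `u`, which carries the constant `β^√(1+2d/Λ)`.
  have hb : betaV q Λ ^ Real.sqrt (1 + 2 * d / Λ) ≠ 0 :=
    (Real.rpow_pos_of_pos (Real.rpow_pos_of_pos (by positivity) _) _).ne'
  refine ⟨τ / betaV q Λ ^ Real.sqrt (1 + 2 * d / Λ), fun s hs => ?_⟩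
  have h1 := hτ s hs
  rw [gSol_eq hq hΛ] at h1 ⊢
  rw [div_mul_cancel₀ _ hb]
  linear_combination h1

/-- The degree 2 solution. Under the Felli–Schneider condition, for all
sufficiently small ε ≥ 0 the set of H²((0,∞))-solutions of the inhomogeneous equation is
exactly the one-parameter family {g_τ : τ ∈ ℝ}. -/
theorem degree_two_solutions (d : ℕ) (hd : 2 ≤ d) (q : ℝ) (hq : 2 < q)
    (hq' : d = 2 ∨ q < 2 * d / ((d : ℝ) - 2)) (Λ : ℝ) (hΛ : 0 < Λ)
    (hFS : Λ = 4 * ((d : ℝ) - 1) / (q ^ 2 - 4)) :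
    ∃ ε₀ : ℝ, 0 < ε₀ ∧ ∀ ε : ℝ, 0 ≤ ε → ε < ε₀ → ∀ g : ℝ → ℝ,
      IsH2Sol d q Λ ε g ↔ ∃ τ : ℝ, Set.EqOn g (gSol d q Λ ε τ) (Set.Ioi 0) := by
  have hab := afrak_lt_bfrak hd hq hΛ hFS
  exact ⟨1, one_pos, fun ε _ hε g =>
    ⟨eqOn_of_isH2Sol hq hΛ hε hab, fun ⟨_, h⟩ => isH2Sol_of_eqOn hq hΛ hε hab h⟩⟩
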